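/- arXiv:2403.09335 — 5 statements merged into one kernel-verified Lean document; each statement's English description precedes it below -/
import Mathlib

section
/- Let x_0,…,x_N ∈ ℝ^d, let X : [0,N] → ℝ^d be the piecewise linear interpolation of x, and let Z denote the backward sawtooth signature coefficients of X with unit initial datum. Then for every integer 0 ≤ m ≤ N, every n ≥ 2 and every word (j_1,…,j_n) with letters in {1,…,d}: ⟨Z_m,(j_1,…,j_n)⟩ = Σ over compositions I = (I_1,…,I_k) of n with I_1 ≥ 2 of (1/I! − 1/((I_1−1)!·I_2!⋯I_k!))·Σ_{0 ≤ l_1 < ⋯ < l_k < m} ∏_{r=1}^{k} ∏_{p ∈ B_r} Δx_{l_r}^{j_{n+1−p}}, where B_1,…,B_k are the consecutive blocks of {1,…,n} determined by I (so the blocks are applied to the reversed word (j_n,…,j_1)). -/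
open scoped Nat
open MeasureTheory

/-!
On `[k, k + 1]` the path has the constant velocity `Δx_k`, so by Chen's identity `Z_{k+u}` is the
product of `Z_k` with `exp (u Δx_k)`, where the empty word has the value `1` and, because of the
sawtooth, a one-letter word has at time `k` the value `-Δx_k`. At `u = 1` this is a linear recursion
in `k`, in which the contributions of the prefixes of length `0` and `1` of the reversed word merge
into a single term of weight `1 / t! - 1 / (t - 1)!`. This weight vanishes for `t = 1`, whence
`I₁ ≥ 2`. The recursion multiplies by unitriangular matrices `1 + K_k`, and the entry `(0, n)` of
their ordered product is a sum over chains `0 = s_0 < ⋯ < s_r = n`, that is, over compositions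
of `n`, and over times `l_1 < ⋯ < l_r`.
-/

section IteratedSums

variable {R : Type*} [CommSemiring R]

/-- The iterated sum `∑ f 0 (l 0) ⋯ f (k - 1) (l (k - 1))` over `0 ≤ l 0 < ⋯ < l (k - 1) < m`. -/
def strictMonoSum (f : ℕ → ℕ → R) (k m : ℕ) : R :=
  ∑ l : Fin k → Fin m with StrictMono l, ∏ r : Fin k, f r (l r)

lemma strictMonoSum_zero_left (f : ℕ → ℕ → R) (m : ℕ) : strictMonoSum f 0 m = 1 := by
  simp [strictMonoSum, Subsingleton.strictMono]

lemma strictMonoSum_congr {f g : ℕ → ℕ → R} {k : ℕ} (h : ∀ r < k, f r = g r) (m : ℕ) :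
    strictMonoSum f k m = strictMonoSum g k m :=
  Finset.sum_congr rfl fun l _ => Finset.prod_congr rfl fun r _ => congrFun (h r r.2) (l r)

lemma strictMono_snoc {α : Type*} [Preorder α] {k : ℕ} {l : Fin k → α} {a : α}
    (hl : StrictMono l) (ha : ∀ i, l i < a) :
    StrictMono (Fin.snoc l a : Fin (k + 1) → α) := by
  intro i j hij
  induction j using Fin.lastCases with
  | last =>
    obtain ⟨i, rfl⟩ := Fin.exists_castSucc_eq.2 hij.ne
    simpa using ha i
  | cast j =>
    obtain ⟨i, rfl⟩ := Fin.exists_castSucc_eq.2 (hij.trans (Fin.castSucc_lt_last j)).ne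
    simpa using hl (by simpa using hij)

lemma strictMonoSum_succ_left (f : ℕ → ℕ → R) (k m : ℕ) :
    strictMonoSum f (k + 1) m = ∑ a ∈ Finset.range m, strictMonoSum f k a * f k a := by
  simp only [strictMonoSum, Finset.sum_range, Finset.sum_mul]
  rw [Finset.sum_sigma']
  symm
  refine Finset.sum_bij (fun al _ => Fin.snoc (Fin.castLE al.1.2.le ∘ al.2) al.1) ?_ ?_ ?_ ?_
  · rintro ⟨a, l⟩ hl
    simp only [Finset.mem_sigma, Finset.mem_filter_univ, Finset.mem_univ, true_and] at hl ⊢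
    exact strictMono_snoc ((Fin.strictMono_castLE _).comp hl) fun i => (l i).2
  · rintro ⟨a, l⟩ _ ⟨b, l'⟩ _ h
    obtain ⟨hl, rfl⟩ := Fin.snoc_injective2 h
    obtain rfl : l = l' := (Fin.castLE_injective a.2.le).comp_left hl
    rfl
  · intro l hl
    have hl : StrictMono l := (Finset.mem_filter.1 hl).2
    refine ⟨⟨l (Fin.last k), fun i => ⟨l i.castSucc, hl i.castSucc_lt_last⟩⟩, ?_,
      Fin.snoc_init_self l⟩
    simp only [Finset.mem_sigma, Finset.mem_filter_univ, Finset.mem_univ, true_and]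
    exact fun i j hij => hl (Fin.castSucc_lt_castSucc_iff.2 hij)
  · rintro ⟨a, l⟩ _
    simp [Fin.prod_univ_castSucc]

lemma strictMonoSum_succ_zero (f : ℕ → ℕ → R) (k : ℕ) : strictMonoSum f (k + 1) 0 = 0 := by
  simp [strictMonoSum_succ_left]

lemma strictMonoSum_succ_succ (f : ℕ → ℕ → R) (k m : ℕ) :
    strictMonoSum f (k + 1) (m + 1) =
      strictMonoSum f (k + 1) m + strictMonoSum f k m * f k m := by
  simp only [strictMonoSum_succ_left, Finset.sum_range_succ]

end IteratedSums

section Compositions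

lemma sum_composition_succ {M : Type*} [AddCommMonoid M] (F : List ℕ → M) (n : ℕ) :
    ∑ c : Composition (n + 1), F c.blocks =
      ∑ j ∈ Finset.range (n + 1), ∑ c : Composition j, F (c.blocks ++ [n + 1 - j]) := by
  rw [Finset.sum_range, Finset.sum_sigma']
  symm
  refine Finset.sum_bij
    (fun jc _ => (jc.2.append (.single (n + 1 - jc.1) (by omega))).cast (by omega)) ?_ ?_ ?_ ?_
  · intros
    exact Finset.mem_univ _
  · rintro ⟨i, c⟩ _ ⟨j, c'⟩ _ h
    obtain ⟨hblocks, hlast⟩ := List.append_inj' (congrArg Composition.blocks h) rfl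
    obtain rfl : i = j := by
      simp only [Composition.single_blocks, List.cons.injEq, and_true] at hlast
      omega
    obtain rfl : c = c' := Composition.ext hblocks
    rfl
  · intro c _
    have hne : c.blocks ≠ [] := by simp
    obtain ⟨B, b, hsplit⟩ := (List.eq_nil_or_concat c.blocks).resolve_left hne
    have hsum : B.sum + b = n + 1 := by simpa [hsplit] using c.blocks_sum
    have hpos : 0 < b := c.blocks_pos (by simp [hsplit])
    refine ⟨⟨⟨B.sum, by omega⟩, B, fun hi => c.blocks_pos (by simp [hsplit, hi]), rfl⟩,
      by simp, Composition.ext ?_⟩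
    change B ++ [n + 1 - B.sum] = c.blocks
    rw [hsplit, List.concat_eq_append, ← hsum, Nat.add_sub_cancel_left]
  · intros
    rfl

variable {R : Type*} [CommSemiring R]

/-- The sum of `∏ r, K (l r) (s r) (s (r + 1))` over the times `0 ≤ l 0 < l 1 < ⋯ < m`, where
`0 = s 0, s 1, …` are the partial sums of `B`. -/
def blocksSum (K : ℕ → ℕ → ℕ → R) (B : List ℕ) (m : ℕ) : R :=
  strictMonoSum (fun r l => K l (B.take r).sum (B.take (r + 1)).sum) B.length m

lemma blocksSum_nil (K : ℕ → ℕ → ℕ → R) (m : ℕ) : blocksSum K [] m = 1 :=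
  strictMonoSum_zero_left _ m

lemma blocksSum_append_singleton_zero (K : ℕ → ℕ → ℕ → R) (B : List ℕ) (b : ℕ) :
    blocksSum K (B ++ [b]) 0 = 0 := by
  simp [blocksSum, strictMonoSum_succ_zero]

lemma blocksSum_append_singleton_succ (K : ℕ → ℕ → ℕ → R) (B : List ℕ) (b m : ℕ) :
    blocksSum K (B ++ [b]) (m + 1) =
      blocksSum K (B ++ [b]) m + blocksSum K B m * K m B.sum (B.sum + b) := by
  have hinit : strictMonoSum (fun r l => K l ((B ++ [b]).take r).sum ((B ++ [b]).take (r + 1)).sum)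
      B.length m = blocksSum K B m :=
    strictMonoSum_congr (fun r hr => by
      rw [List.take_append_of_le_length hr.le, List.take_append_of_le_length hr]) m
  rw [blocksSum, List.length_append, List.length_singleton, strictMonoSum_succ_succ, hinit]
  simp [blocksSum]

/-- The sum of `∏ r, K (l r) (s r) (s (r + 1))` over the chains `0 = s 0 < s 1 < ⋯ < s k = n`
(encoded as compositions of `n`) and the times `0 ≤ l 0 < ⋯ < l (k - 1) < m`: the `(0, n)` entry
of the ordered product over `l < m` of the unitriangular matrices `1 + K l`. -/
def chainSum (K : ℕ → ℕ → ℕ → R) (n m : ℕ) : R :=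
  ∑ c : Composition n, blocksSum K c.blocks m

lemma chainSum_zero_left (K : ℕ → ℕ → ℕ → R) (m : ℕ) : chainSum K 0 m = 1 := by
  have hblocks (c : Composition 0) : c.blocks = [] := c.blocks_eq_nil.2 rfl
  simp [chainSum, hblocks, blocksSum_nil, composition_card]

lemma chainSum_succ_zero (K : ℕ → ℕ → ℕ → R) (n : ℕ) : chainSum K (n + 1) 0 = 0 := by
  simp [chainSum, sum_composition_succ (blocksSum K · 0), blocksSum_append_singleton_zero]

theorem chainSum_succ_succ (K : ℕ → ℕ → ℕ → R) (n m : ℕ) :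
    chainSum K (n + 1) (m + 1) =
      chainSum K (n + 1) m + ∑ j ∈ Finset.range (n + 1), chainSum K j m * K m j (n + 1) := by
  simp only [chainSum, sum_composition_succ (blocksSum K · (m + 1)),
    sum_composition_succ (blocksSum K · m), blocksSum_append_singleton_succ,
    Finset.sum_add_distrib, Finset.sum_mul]
  congr 1
  refine Finset.sum_congr rfl fun j hj => Finset.sum_congr rfl fun c _ => ?_
  rw [c.blocks_sum, Nat.add_sub_cancel' (Finset.mem_range.1 hj).le]

end Compositions

section ChenExpansion

/-- The `n`-th entry at time `u` of the signature with value `y` at time `0` along a path whose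
`p`-th letter moves at constant speed `a p`. Chen's identity writes it as the product of `y` with
the exponential of `u` times the increment. -/
noncomputable def chenExpansion (a y : ℕ → ℝ) (n : ℕ) (u : ℝ) : ℝ :=
  ∑ j ∈ Finset.range (n + 1), u ^ (n - j) / (n - j)! * ((∏ p ∈ Finset.Ico j n, a p) * y j)

lemma chenExpansion_zero_left (a y : ℕ → ℝ) (u : ℝ) : chenExpansion a y 0 u = y 0 := by
  simp [chenExpansion]

lemma chenExpansion_one_left (a y : ℕ → ℝ) (u : ℝ) :
    chenExpansion a y 1 u = u * (a 0 * y 0) + y 1 := by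
  simp [chenExpansion, Finset.sum_range_succ]

lemma chenExpansion_succ (a y : ℕ → ℝ) (n : ℕ) (u : ℝ) :
    chenExpansion a y (n + 1) u = ∑ j ∈ Finset.range (n + 1),
      u ^ (n - j + 1) / (n - j + 1)! * ((∏ p ∈ Finset.Ico j (n + 1), a p) * y j) + y (n + 1) := by
  rw [chenExpansion, Finset.sum_range_succ]
  congr 1
  · refine Finset.sum_congr rfl fun j hj => ?_
    rw [Nat.sub_add_comm (Nat.lt_succ_iff.1 (Finset.mem_range.1 hj))]
  · simp

lemma chenExpansion_zero_right (a y : ℕ → ℝ) (n : ℕ) : chenExpansion a y n 0 = y n := by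
  cases n <;> simp [chenExpansion_zero_left, chenExpansion_succ]

lemma chenExpansion_add_two_one (a y : ℕ → ℝ) (n : ℕ) :
    chenExpansion a y (n + 2) 1 =
      ∑ j ∈ Finset.range n, 1 / (n - j)! * ((∏ p ∈ Finset.Ico (j + 2) (n + 2), a p) * y (j + 2)) +
        1 / (n + 1)! * ((∏ p ∈ Finset.Ico 1 (n + 2), a p) * y 1) +
        1 / (n + 2)! * (a 0 * (∏ p ∈ Finset.Ico 1 (n + 2), a p) * y 0) + y (n + 2) := by
  rw [chenExpansion, Finset.sum_range_succ, Finset.sum_range_succ', Finset.sum_range_succ',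
    Finset.prod_eq_prod_Ico_succ_bot (n + 1).succ_pos]
  simp

lemma continuous_chenExpansion (a y : ℕ → ℝ) (n : ℕ) : Continuous (chenExpansion a y n) := by
  unfold chenExpansion
  fun_prop

lemma hasDerivAt_pow_succ_div_factorial (i : ℕ) (u : ℝ) :
    HasDerivAt (fun v : ℝ => v ^ (i + 1) / (i + 1)!) (u ^ i / i !) u := by
  refine ((hasDerivAt_pow (i + 1) u).div_const _).congr_deriv ?_
  rw [Nat.factorial_succ, Nat.add_sub_cancel, Nat.cast_mul]
  exact mul_div_mul_left _ _ (by positivity)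

lemma hasDerivAt_chenExpansion_succ (a y : ℕ → ℝ) (n : ℕ) (u : ℝ) :
    HasDerivAt (chenExpansion a y (n + 1)) (a n * chenExpansion a y n u) u := by
  have hsum := (HasDerivAt.fun_sum (u := Finset.range (n + 1)) fun j _ =>
    (hasDerivAt_pow_succ_div_factorial (n - j) u).mul_const
      ((∏ p ∈ Finset.Ico j (n + 1), a p) * y j)).add_const (y (n + 1))
  rw [funext (chenExpansion_succ a y n)]
  refine hsum.congr_deriv ?_
  rw [chenExpansion, Finset.mul_sum]
  refine Finset.sum_congr rfl fun j hj => ?_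
  rw [Finset.prod_Ico_succ_top (Nat.lt_succ_iff.1 (Finset.mem_range.1 hj))]
  ring

end ChenExpansion

section PiecewiseLinear

/-- `X` is on `[0, N]` the piecewise linear interpolation of the values `x k` at the integers. -/
def IsLinearInterpolation (N : ℕ) (x : ℕ → ℝ) (X : ℝ → ℝ) : Prop :=
  ∀ t ∈ Set.Icc (0 : ℝ) N, X t = x ⌊t⌋.toNat + (t - ⌊t⌋) * (x (⌊t⌋.toNat + 1) - x ⌊t⌋.toNat)

namespace IsLinearInterpolation

variable {N : ℕ} {x : ℕ → ℝ} {X : ℝ → ℝ}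

lemma apply_natCast (hX : IsLinearInterpolation N x X) {k : ℕ} (hk : k ≤ N) : X k = x k := by
  simpa using hX k ⟨k.cast_nonneg, by exact_mod_cast hk⟩

lemma apply_of_mem_Ico (hX : IsLinearInterpolation N x X) {k : ℕ} (hk : k < N) {t : ℝ}
    (ht : t ∈ Set.Ico (k : ℝ) (k + 1)) : X t = x k + (t - k) * fwdDiff 1 x k := by
  have hkN : (k : ℝ) + 1 ≤ N := by exact_mod_cast hk
  have hfloor : ⌊t⌋ = k := Int.floor_eq_iff.2 (by simpa using ht)
  simpa [hfloor, fwdDiff] using hX t ⟨k.cast_nonneg.trans ht.1, ht.2.le.trans hkN⟩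

lemma deriv_of_mem_Ioo (hX : IsLinearInterpolation N x X) {k : ℕ} (hk : k < N) {s : ℝ}
    (hs : s ∈ Set.Ioo (k : ℝ) (k + 1)) : deriv X s = fwdDiff 1 x k := by
  have hlinear : X =ᶠ[nhds s] fun r => x k + (r - k) * fwdDiff 1 x k := by
    filter_upwards [Ioo_mem_nhds hs.1 hs.2] with r hr
    exact hX.apply_of_mem_Ico hk (Set.Ioo_subset_Ico_self hr)
  simp [hlinear.deriv_eq]

end IsLinearInterpolation

lemma intervalIntegrable_of_eqOn_Ioo {E : Type*} [NormedAddCommGroup E] {N : ℕ} {g : ℝ → E}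
    {q : ℕ → ℝ → E} (hq : ∀ k < N, Continuous (q k))
    (hgq : ∀ k < N, Set.EqOn g (q k) (Set.Ioo k (k + 1))) :
    IntervalIntegrable g volume 0 N := by
  have hstep (k : ℕ) (hk : k < N) : IntervalIntegrable g volume k (k + 1 : ℕ) := by
    refine ((hq k hk).intervalIntegrable _ _).congr_uIoo ?_
    rw [Nat.cast_succ, Set.uIoo_of_le (by simp)]
    exact (hgq k hk).symm
  simpa using IntervalIntegrable.trans_iterate (a := fun k : ℕ => (k : ℝ)) hstep

lemma integral_eq_add_of_hasDerivAt_of_eqOn_Ioo {E : Type*} [NormedAddCommGroup E]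
    [NormedSpace ℝ E] [CompleteSpace E] {N : ℕ} {g : ℝ → E} {Q q : ℕ → ℝ → E}
    (hQ : ∀ k < N, ∀ s, HasDerivAt (Q k) (q k s) s) (hq : ∀ k < N, Continuous (q k))
    (hgq : ∀ k < N, Set.EqOn g (q k) (Set.Ioo k (k + 1))) {k : ℕ} (hk : k < N) {t : ℝ}
    (ht : t ∈ Set.Icc (k : ℝ) (k + 1)) :
    ∫ s in (0 : ℝ)..t, g s = (∫ s in (0 : ℝ)..k, g s) + (Q k t - Q k k) := by
  have hkN : (k : ℝ) + 1 ≤ N := by exact_mod_cast hk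
  have hk0 : (0 : ℝ) ≤ k := k.cast_nonneg
  have hg := intervalIntegrable_of_eqOn_Ioo hq hgq
  have hg_left : IntervalIntegrable g volume 0 k := hg.mono_set <| by
    rw [Set.uIcc_of_le hk0, Set.uIcc_of_le (by linarith)]
    exact Set.Icc_subset_Icc_right (by linarith)
  have hg_right : IntervalIntegrable g volume k t := hg.mono_set <| by
    rw [Set.uIcc_of_le ht.1, Set.uIcc_of_le (by linarith)]
    exact Set.Icc_subset_Icc hk0 (ht.2.trans hkN)
  have hgq_integral : ∫ s in (k : ℝ)..t, g s = ∫ s in (k : ℝ)..t, q k s := by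
    refine intervalIntegral.integral_congr_uIoo ?_
    rw [Set.uIoo_of_le ht.1]
    exact (hgq k hk).mono (Set.Ioo_subset_Ioo_right ht.2)
  rw [← intervalIntegral.integral_add_adjacent_intervals hg_left hg_right, hgq_integral,
    intervalIntegral.integral_eq_sub_of_hasDerivAt (fun s _ => hQ k hk s)
      ((hq k hk).intervalIntegrable _ _)]

end PiecewiseLinear

section Sawtooth

/-- The backward sawtooth signature coefficient `⟨Z_t, (n - 1, …, 1, 0)⟩` of the family of scalar
paths `X`. The word is reversed so that the path `X n` is the outermost integrator of coefficient
`n + 1`; the value `1` of the empty word is the unit initial datum. -/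
noncomputable def sawtoothIntegral (X : ℕ → ℝ → ℝ) : ℕ → ℝ → ℝ
  | 0, _ => 1
  | 1, t => X 0 t - X 0 (⌊t⌋ + 1)
  | n + 2, t => ∫ s in (0 : ℝ)..t, deriv (X (n + 1)) s * sawtoothIntegral X (n + 1) s

lemma sawtoothIntegral_zero (X : ℕ → ℝ → ℝ) (t : ℝ) : sawtoothIntegral X 0 t = 1 := by
  rw [sawtoothIntegral]

/-- `Z n w t` is on `[0, N]` the backward sawtooth signature coefficient
`⟨Z_t, (w 0, …, w (n - 1))⟩` of the path `X`, for all `n ≥ 1`. -/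
structure IsSawtoothSignature {ι : Type*} (N : ℕ) (X : ℝ → ι → ℝ) (Z : ℕ → (ℕ → ι) → ℝ → ℝ) :
    Prop where
  one : ∀ w, ∀ t ∈ Set.Icc (0 : ℝ) N, Z 1 w t = X t (w 0) - X (⌊t⌋ + 1) (w 0)
  recursion : ∀ n, 2 ≤ n → ∀ w, ∀ t ∈ Set.Icc (0 : ℝ) N,
    Z n w t = ∫ s in (0 : ℝ)..t, deriv (fun r => X r (w 0)) s * Z (n - 1) (fun i => w (i + 1)) s

lemma IsSawtoothSignature.eq_sawtoothIntegral {ι : Type*} {N : ℕ} {X : ℝ → ι → ℝ}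
    {Z : ℕ → (ℕ → ι) → ℝ → ℝ} (hZ : IsSawtoothSignature N X Z) {n : ℕ} {v w : ℕ → ι}
    (hvw : ∀ p ≤ n, v p = w (n - p)) {t : ℝ} (ht : t ∈ Set.Icc (0 : ℝ) N) :
    Z (n + 1) w t = sawtoothIntegral (fun p s => X s (v p)) (n + 1) t := by
  induction n generalizing w t with
  | zero => rw [hZ.one w t ht, sawtoothIntegral, hvw 0 le_rfl]
  | succ n ih =>
    rw [hZ.recursion (n + 2) (by omega) w t ht, sawtoothIntegral, hvw (n + 1) le_rfl, Nat.sub_self]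
    refine intervalIntegral.integral_congr fun s hs => congrArg _ (ih (fun p hp => ?_) ?_)
    · rw [hvw p (by omega), Nat.sub_add_comm hp]
    · rw [Set.uIcc_of_le ht.1] at hs
      exact ⟨hs.1, hs.2.trans ht.2⟩

variable {N : ℕ} {x : ℕ → ℕ → ℝ} {X : ℕ → ℝ → ℝ}

lemma sawtoothIntegral_one_natCast (hX : IsLinearInterpolation N (x 0) (X 0)) {k : ℕ}
    (hk : k < N) : sawtoothIntegral X 1 k = -fwdDiff 1 (x 0) k := by
  have hX_succ := hX.apply_natCast (k := k + 1) hk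
  push_cast at hX_succ
  simp [sawtoothIntegral, hX.apply_natCast hk.le, hX_succ, fwdDiff]

lemma sawtoothIntegral_one_of_mem_Ico (hX : IsLinearInterpolation N (x 0) (X 0)) {k : ℕ}
    (hk : k < N) {t : ℝ} (ht : t ∈ Set.Ico (k : ℝ) (k + 1)) :
    sawtoothIntegral X 1 t = (t - k) * fwdDiff 1 (x 0) k + sawtoothIntegral X 1 k := by
  have hfloor : ⌊t⌋ = k := Int.floor_eq_iff.2 (by simpa using ht)
  simp only [sawtoothIntegral, hfloor, hX.apply_of_mem_Ico hk ht, hX.apply_natCast hk.le,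
    Int.cast_natCast, Int.floor_natCast]
  ring

lemma sawtoothIntegral_add_two_eq_chenExpansion (hX : ∀ p, IsLinearInterpolation N (x p) (X p))
    {n : ℕ} (ih : ∀ k < N, ∀ t ∈ Set.Ico (k : ℝ) (k + 1), sawtoothIntegral X (n + 1) t =
      chenExpansion (fun p => fwdDiff 1 (x p) k) (sawtoothIntegral X · k) (n + 1) (t - k))
    {k : ℕ} (hk : k < N) {t : ℝ} (ht : t ∈ Set.Icc (k : ℝ) (k + 1)) :
    sawtoothIntegral X (n + 2) t =
      chenExpansion (fun p => fwdDiff 1 (x p) k) (sawtoothIntegral X · k) (n + 2) (t - k) := by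
  let chen (n k : ℕ) : ℝ → ℝ :=
    chenExpansion (fun p => fwdDiff 1 (x p) k) (sawtoothIntegral X · k) n
  have hderiv (k : ℕ) (_ : k < N) (s : ℝ) : HasDerivAt (fun s => chen (n + 2) k (s - k))
      (fwdDiff 1 (x (n + 1)) k * chen (n + 1) k (s - k)) s :=
    (hasDerivAt_chenExpansion_succ _ _ (n + 1) (s - k)).comp_sub_const s k
  have hcont (k : ℕ) (_ : k < N) :
      Continuous fun s : ℝ => fwdDiff 1 (x (n + 1)) k * chen (n + 1) k (s - k) :=
    continuous_const.mul
      ((continuous_chenExpansion _ _ _).comp (continuous_id.sub continuous_const))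
  have hintegrand (k : ℕ) (hk : k < N) :
      Set.EqOn (fun s => deriv (X (n + 1)) s * sawtoothIntegral X (n + 1) s)
        (fun s => fwdDiff 1 (x (n + 1)) k * chen (n + 1) k (s - k)) (Set.Ioo k (k + 1)) := by
    intro s hs
    simp only [chen, (hX (n + 1)).deriv_of_mem_Ioo hk hs, ih k hk s (Set.Ioo_subset_Ico_self hs)]
  have hintegral := integral_eq_add_of_hasDerivAt_of_eqOn_Ioo hderiv hcont hintegrand hk ht
  simp only [chen, sub_self, chenExpansion_zero_right] at hintegral
  rw [sawtoothIntegral, hintegral, sawtoothIntegral]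
  ring

theorem sawtoothIntegral_eq_chenExpansion (hX : ∀ p, IsLinearInterpolation N (x p) (X p))
    (n : ℕ) {k : ℕ} (hk : k < N) {t : ℝ} (ht : t ∈ Set.Ico (k : ℝ) (k + 1)) :
    sawtoothIntegral X n t =
      chenExpansion (fun p => fwdDiff 1 (x p) k) (sawtoothIntegral X · k) n (t - k) := by
  match n with
  | 0 => simp only [chenExpansion_zero_left, sawtoothIntegral_zero]
  | 1 =>
    rw [chenExpansion_one_left, sawtoothIntegral_one_of_mem_Ico (hX 0) hk ht,
      sawtoothIntegral_zero, mul_one]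
  | n + 2 =>
    exact sawtoothIntegral_add_two_eq_chenExpansion hX
      (fun k hk t ht => sawtoothIntegral_eq_chenExpansion hX (n + 1) hk ht) hk
      (Set.Ico_subset_Icc_self ht)

/-- The weight of the interval `[s, t)` as a block of a composition: a block that starts at `0`
is the first one and carries `1 / I₁! - 1 / (I₁ - 1)!`, any other block carries `1 / I_r!`. -/
noncomputable def sawtoothWeight (s t : ℕ) : ℝ :=
  if s = 0 then 1 / (t ! : ℝ) - 1 / ((t - 1)! : ℝ) else 1 / ((t - s)! : ℝ)

/-- The factor contributed by the block `[s, t)` of a composition placed at time `l`. -/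
noncomputable def sawtoothKernel (x : ℕ → ℕ → ℝ) (l s t : ℕ) : ℝ :=
  sawtoothWeight s t * ∏ p ∈ Finset.Ico s t, fwdDiff 1 (x p) l

lemma sawtoothKernel_of_ne_zero (x : ℕ → ℕ → ℝ) (l : ℕ) {s : ℕ} (hs : s ≠ 0) (t : ℕ) :
    sawtoothKernel x l s t = 1 / (t - s)! * ∏ p ∈ Finset.Ico s t, fwdDiff 1 (x p) l := by
  rw [sawtoothKernel, sawtoothWeight, if_neg hs]

lemma sawtoothKernel_zero_succ (x : ℕ → ℕ → ℝ) (l t : ℕ) :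
    sawtoothKernel x l 0 (t + 1) = (1 / (t + 1)! - 1 / t !) *
      (fwdDiff 1 (x 0) l * ∏ p ∈ Finset.Ico 1 (t + 1), fwdDiff 1 (x p) l) := by
  rw [sawtoothKernel, sawtoothWeight, if_pos rfl, Nat.add_sub_cancel,
    Finset.prod_eq_prod_Ico_succ_bot t.succ_pos]

lemma sawtoothKernel_zero_one (x : ℕ → ℕ → ℝ) (l : ℕ) : sawtoothKernel x l 0 1 = 0 := by
  simp [sawtoothKernel_zero_succ]

/-- At `u = 1` in Chen's identity, the jump `Z_k = -Δx_k` of the one-letter words merges the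
terms `j = 0` and `j = 1` into the weight of a first block. -/
lemma sawtoothIntegral_natCast_add_one (hX : ∀ p, IsLinearInterpolation N (x p) (X p)) (n : ℕ)
    {k : ℕ} (hk : k < N) :
    sawtoothIntegral X (n + 2) (k + 1 : ℕ) = sawtoothIntegral X (n + 2) k +
      (∑ j ∈ Finset.range n, sawtoothIntegral X (j + 2) k * sawtoothKernel x k (j + 2) (n + 2) +
        sawtoothKernel x k 0 (n + 2)) := by
  rw [sawtoothIntegral_add_two_eq_chenExpansion hX
    (fun k hk t ht => sawtoothIntegral_eq_chenExpansion hX (n + 1) hk ht) hk (by simp),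
    Nat.cast_succ, add_sub_cancel_left, chenExpansion_add_two_one,
    sawtoothIntegral_one_natCast (hX 0) hk, sawtoothIntegral_zero, sawtoothKernel_zero_succ]
  have hkernel (j : ℕ) : sawtoothKernel x k (j + 2) (n + 2) =
      1 / (n - j)! * ∏ p ∈ Finset.Ico (j + 2) (n + 2), fwdDiff 1 (x p) k := by
    rw [sawtoothKernel_of_ne_zero x k (j + 1).succ_ne_zero, Nat.add_sub_add_right]
  simp only [hkernel, mul_left_comm (sawtoothIntegral X _ _), mul_comm (sawtoothIntegral X _ _)]
  ring

lemma chainSum_sawtoothKernel_one (x : ℕ → ℕ → ℝ) (m : ℕ) :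
    chainSum (sawtoothKernel x) 1 m = 0 := by
  induction m with
  | zero => exact chainSum_succ_zero _ 0
  | succ m ih => simp [chainSum_succ_succ _ 0, ih, sawtoothKernel_zero_one]

theorem sawtoothIntegral_eq_chainSum (hX : ∀ p, IsLinearInterpolation N (x p) (X p)) (n : ℕ)
    {m : ℕ} (hm : m ≤ N) :
    sawtoothIntegral X (n + 2) m = chainSum (sawtoothKernel x) (n + 2) m := by
  induction m generalizing n with
  | zero => simp [sawtoothIntegral, chainSum_succ_zero]
  | succ m ih =>
    rw [sawtoothIntegral_natCast_add_one hX n hm, chainSum_succ_succ, Finset.sum_range_succ',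
      Finset.sum_range_succ', chainSum_sawtoothKernel_one, chainSum_zero_left, zero_mul, add_zero,
      one_mul]
    simp only [ih _ (Nat.le_of_succ_le hm)]

end Sawtooth

section Coefficients

/-- The coefficient `1 / I! - 1 / ((I₁ - 1)! I₂! ⋯ I_k!)` of the composition `I` with the given
list of blocks. -/
noncomputable def sawtoothCoeff (B : List ℕ) : ℝ :=
  1 / ((B.map Nat.factorial).prod : ℝ) -
    1 / (((B.headI - 1)! * (B.tail.map Nat.factorial).prod : ℕ) : ℝ)

lemma two_le_headI_of_sawtoothCoeff_ne_zero {B : List ℕ} (hB : sawtoothCoeff B ≠ 0) :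
    2 ≤ B.headI := by
  contrapose! hB
  rcases B with _ | ⟨b, B⟩
  · simp [sawtoothCoeff]
  · have hb : b < 2 := hB
    interval_cases b <;> simp [sawtoothCoeff]

lemma prod_sawtoothWeight_eq_sawtoothCoeff {b : ℕ} (hb : b ≠ 0) (B : List ℕ) :
    ∏ r : Fin (b :: B).length,
      sawtoothWeight ((b :: B).take r).sum ((b :: B).take (r + 1)).sum =
        sawtoothCoeff (b :: B) := by
  have htail (r : Fin B.length) :
      sawtoothWeight (b + (B.take r).sum) (b + (B.take (r + 1)).sum) = ((B[r])! : ℝ)⁻¹ := by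
    simp [sawtoothWeight, hb, List.sum_take_succ, Nat.add_sub_add_left]
  have hprod : ∏ r : Fin B.length, ((B[r])! : ℝ)⁻¹ = ((B.map Nat.factorial).prod : ℝ)⁻¹ := by
    rw [Finset.prod_inv_distrib, ← Nat.cast_prod]
    exact congrArg (fun a : ℕ => (a : ℝ)⁻¹) (Fin.prod_univ_fun_getElem B Nat.factorial)
  calc ∏ r : Fin (B.length + 1),
      sawtoothWeight ((b :: B).take r).sum ((b :: B).take (r + 1)).sum
      = sawtoothWeight 0 b * ∏ r : Fin B.length, ((B[r])! : ℝ)⁻¹ := by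
        rw [Fin.prod_univ_succ]
        refine congrArg₂ _ (by simp) (Finset.prod_congr rfl fun r _ => ?_)
        rw [← htail r, Fin.val_succ, List.take_succ_cons, List.take_succ_cons, List.sum_cons,
          List.sum_cons]
    _ = sawtoothCoeff (b :: B) := by
        rw [hprod, sawtoothWeight, if_pos rfl, sawtoothCoeff]
        simp only [List.map_cons, List.prod_cons, List.headI_cons, List.tail_cons, Nat.cast_mul]
        ring

lemma blocksSum_sawtoothKernel (x : ℕ → ℕ → ℝ) {n : ℕ} (hn : n ≠ 0) (c : Composition n) (m : ℕ) :
    blocksSum (sawtoothKernel x) c.blocks m = sawtoothCoeff c.blocks *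
      ∑ l : Fin c.length → Fin m with StrictMono l,
        ∏ r : Fin c.length, ∏ q : Fin (c.blocksFun r), fwdDiff 1 (x (c.sizeUpTo r + q)) (l r) := by
  have hcoeff : ∏ r : Fin c.length, sawtoothWeight (c.sizeUpTo r) (c.sizeUpTo (r + 1)) =
      sawtoothCoeff c.blocks := by
    obtain ⟨_ | ⟨b, B⟩, hpos, hsum⟩ := c
    · exact absurd hsum.symm hn
    · exact prod_sawtoothWeight_eq_sawtoothCoeff (hpos (by simp)).ne' B
  rw [← hcoeff, Finset.mul_sum]
  refine Finset.sum_congr rfl fun l _ => ?_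
  rw [← Finset.prod_mul_distrib]
  refine Finset.prod_congr rfl fun r _ => ?_
  change sawtoothKernel x (l r) (c.sizeUpTo r) (c.sizeUpTo (r + 1)) = _
  rw [sawtoothKernel, Finset.prod_Ico_eq_prod_range, c.sizeUpTo_succ', Nat.add_sub_cancel_left,
    Finset.prod_range]

end Coefficients

theorem sawtooth_signature_at_integers_general {ι : Type*} {N : ℕ} {x : ℕ → ι → ℝ}
    {X : ℝ → ι → ℝ} (hX : ∀ j, IsLinearInterpolation N (x · j) (X · j))
    {Z : ℕ → (ℕ → ι) → ℝ → ℝ} (hZ : IsSawtoothSignature N X Z)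
    {m : ℕ} (hm : m ≤ N) {n : ℕ} (hn : 2 ≤ n) (w : ℕ → ι) :
    Z n w m = ∑ c : Composition n with 2 ≤ c.blocks.headI, sawtoothCoeff c.blocks *
      ∑ l : Fin c.length → Fin m with StrictMono l,
        ∏ r : Fin c.length, ∏ q : Fin (c.blocksFun r),
          fwdDiff 1 (x · (w (n - 1 - (c.sizeUpTo r + q)))) (l r) := by
  obtain ⟨n, rfl⟩ := Nat.exists_eq_add_of_le' hn
  rw [hZ.eq_sawtoothIntegral (v := fun p => w (n + 1 - p)) (fun _ _ => rfl)
      ⟨m.cast_nonneg, by exact_mod_cast hm⟩,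
    sawtoothIntegral_eq_chainSum (fun p => hX (w (n + 1 - p))) n hm, chainSum,
    Finset.sum_filter_of_ne fun c _ hc =>
      two_le_headI_of_sawtoothCoeff_ne_zero (left_ne_zero_of_mul hc)]
  exact Finset.sum_congr rfl fun c _ => blocksSum_sawtoothKernel _ (by omega) c m

/-- The backward sawtooth signature coefficients (unit initial datum) of the piecewise
linear interpolation of a time series `x`, evaluated at integer times, as a sum over
compositions whose first part is at least `2`, applied to the reversed word. -/
theorem sawtooth_signature_at_integers {d : ℕ} (N : ℕ) (hN : 1 ≤ N)
    (x : ℕ → Fin d → ℝ) (X : ℝ → Fin d → ℝ)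
    (hX : ∀ t ∈ Set.Icc (0:ℝ) (N:ℝ), ∀ j : Fin d,
      X t j = x ⌊t⌋.toNat j + (t - ⌊t⌋) * (x (⌊t⌋.toNat + 1) j - x ⌊t⌋.toNat j))
    (Z : ℕ → (ℕ → Fin d) → ℝ → ℝ)
    (hZ1 : ∀ (w : ℕ → Fin d), ∀ t ∈ Set.Icc (0:ℝ) (N:ℝ),
      Z 1 w t = X t (w 0) - X ((⌊t⌋ : ℝ) + 1) (w 0))
    (hZrec : ∀ n, 2 ≤ n → ∀ (w : ℕ → Fin d), ∀ t ∈ Set.Icc (0:ℝ) (N:ℝ),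
      Z n w t = ∫ s in (0:ℝ)..t,
        deriv (fun r => X r (w 0)) s * Z (n - 1) (fun i => w (i + 1)) s)
    (m : ℕ) (hm : m ≤ N) (n : ℕ) (hn : 2 ≤ n) (w : ℕ → Fin d) :
    Z n w (m : ℝ) =
      ∑ c ∈ Finset.univ.filter (fun c : Composition n => 2 ≤ c.blocks.headI),
        (1 / ((c.blocks.map Nat.factorial).prod : ℝ)
          - 1 / ((((c.blocks.headI - 1)! * (c.blocks.tail.map Nat.factorial).prod : ℕ)) : ℝ)) *
          ∑ l ∈ Finset.univ.filter (fun l : Fin c.length → Fin m => StrictMono l),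
            ∏ r : Fin c.length, ∏ q : Fin (c.blocksFun r),
              (x ((l r : ℕ) + 1) (w (n - 1 - (c.sizeUpTo r + q))) -
                x (l r : ℕ) (w (n - 1 - (c.sizeUpTo r + q)))) :=
  sawtooth_signature_at_integers_general (fun j t ht => hX t ht j) ⟨hZ1, hZrec⟩ hm hn w
end

section
/- Let λ > 0 be real and N ≥ 1 an integer. Define real numbers b_l recursively by b_0 = 1 and, for l ≥ 1, b_l := −(1/N)·∫_0^N ( Σ_{j=0}^{l−1} λ^{l−j}·(t^{l−j}/(l−j)!)·b_j − λ^l·Σ_{k=0}^{⌊t⌋−1} (t−k−1)^{l−1}/(l−1)! ) dt. Then for every l ≥ 1, b_l = λ^l·(bernoulli l)/l!. (These are the forward optimal average constants for the path X_t = λt produced by the paper's variance-minimization, and they recover the Bernoulli numbers with B_1 = −1/2.) -/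
open scoped Nat
open MeasureTheory

/-!
With the candidate constants `B_j λ ^ j / j!`, the polynomial part of the sawtooth component of
level `l` is `(P_l(t) - B_l) λ ^ l / l!`. By `P_l(x + 1) = P_l(x) + l x ^ (l - 1)`, each jump term
accounts for one unit shift, so subtracting them replaces `t` by its fractional part. The component
is thus periodic, and since `P_l` has mean zero on `[0, 1]` its mean over `[0, N]` is
`-B_l λ ^ l / l!`. As level `l` involves only `b_j` with `j < l`, strong induction concludes.
-/

theorem bernoulliFun_add_one (l : ℕ) (x : ℝ) :
    bernoulliFun l (x + 1) = bernoulliFun l x + l * x ^ (l - 1) := by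
  have h := congrArg (fun p : Polynomial ℚ ↦ (p.map (algebraMap ℚ ℝ)).eval x)
    (Polynomial.bernoulli_comp_one_add_X l)
  simpa [bernoulliFun, Polynomial.map_comp, add_comm] using h

theorem bernoulliFun_div_factorial (l : ℕ) (x : ℝ) :
    bernoulliFun l x / (l ! : ℝ) =
      ∑ j ∈ Finset.range (l + 1),
        x ^ (l - j) / ((l - j)! : ℝ) * (((bernoulli j : ℚ) : ℝ) / (j ! : ℝ)) := by
  have hsum : bernoulliFun l x =
      ∑ j ∈ Finset.range (l + 1), ((bernoulli j : ℚ) : ℝ) * (l.choose j : ℝ) * x ^ (l - j) := by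
    simp [bernoulliFun, Polynomial.bernoulli, Polynomial.map_sum, Polynomial.eval_finsetSum]
  rw [hsum, Finset.sum_div]
  refine Finset.sum_congr rfl fun j hj ↦ ?_
  rw [Nat.cast_choose ℝ (Finset.mem_range_succ_iff.1 hj)]
  field_simp

theorem sum_range_sub_sub_one_pow_div_factorial (l n : ℕ) (x : ℝ) :
    ∑ k ∈ Finset.range n, (x - (k : ℝ) - 1) ^ l / (l ! : ℝ) =
      (bernoulliFun (l + 1) x - bernoulliFun (l + 1) (x - n)) / ((l + 1)! : ℝ) := by
  have hterm (k : ℕ) : (x - (k : ℝ) - 1) ^ l / (l ! : ℝ) =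
      (bernoulliFun (l + 1) (x - (k : ℝ)) - bernoulliFun (l + 1) (x - ((k + 1 : ℕ) : ℝ))) /
        ((l + 1)! : ℝ) := by
    have hstep := bernoulliFun_add_one (l + 1) (x - (k : ℝ) - 1)
    rw [sub_add_cancel, Nat.add_sub_cancel] at hstep
    rw [hstep, Nat.cast_succ k, ← sub_sub, add_sub_cancel_left, Nat.factorial_succ, Nat.cast_mul]
    field_simp
  simp only [hterm]
  rw [← Finset.sum_div, Finset.sum_range_sub' fun k : ℕ ↦ bernoulliFun (l + 1) (x - (k : ℝ)),
    Nat.cast_zero, sub_zero]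

theorem integral_bernoulliFun_sub_bernoulli_div_factorial {l : ℕ} (hl : l ≠ 0) :
    ∫ t in (0 : ℝ)..1, (bernoulliFun l t - ((bernoulli l : ℚ) : ℝ)) / (l ! : ℝ) =
      -(((bernoulli l : ℚ) : ℝ) / (l ! : ℝ)) := by
  rw [intervalIntegral.integral_div, intervalIntegral.integral_sub
    (intervalIntegrable_bernoulliFun _ _ _) intervalIntegrable_const,
    integral_bernoulliFun_eq_zero hl, intervalIntegral.integral_const, sub_zero, one_smul, zero_sub,
    neg_div]

theorem intervalIntegral_comp_fract {E : Type*} [NormedAddCommGroup E] [NormedSpace ℝ E]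
    {f : ℝ → E} (hf : IntervalIntegrable f volume 0 1) (n : ℤ) :
    ∫ t in (0 : ℝ)..n, f (Int.fract t) = n • ∫ t in (0 : ℝ)..1, f t := by
  have hperiodic : Function.Periodic (fun t : ℝ ↦ f (Int.fract t)) 1 :=
    (Int.fract_periodic ℝ).comp f
  have hfract : Set.EqOn f (fun t ↦ f (Int.fract t)) (Set.uIoo 0 1) := by
    intro t ht
    rw [Set.uIoo_of_le zero_le_one] at ht
    exact congrArg f (Int.fract_eq_self.2 ⟨ht.1.le, ht.2⟩).symm
  have hint := hperiodic.intervalIntegrable₀ one_ne_zero (hf.congr_uIoo hfract)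
  rw [intervalIntegral.integral_congr_uIoo hfract]
  simpa using hperiodic.intervalIntegral_add_zsmul_eq n 0 hint

section Algebra

variable {A : Type*} [Ring A] [Algebra ℝ A]

/-- The `l`-th component at time `t` of the forward sawtooth signature of the path `X_t = λt` with
initial datum `(1, b_1, …, b_{l-1}, 0, …)`, where `b 0` stands for the leading entry. The direction
`λ` may lie in any real algebra. Meaningful only for `1 ≤ l`, as `l - 1` is truncated, and `0 ≤ t`,
as `⌊t⌋₊ = 0` for negative `t`. -/
noncomputable def forwardSawtooth (lam : A) (b : ℕ → A) (l : ℕ) (t : ℝ) : A :=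
  (∑ j ∈ Finset.range l, (t ^ (l - j) / ((l - j)! : ℝ)) • lam ^ (l - j) * b j) -
    (∑ k ∈ Finset.range ⌊t⌋₊, (t - (k : ℝ) - 1) ^ (l - 1) / ((l - 1)! : ℝ)) • lam ^ l

/-- The closed form `(B_l / l!) λ ^ l` of the `l`-th forward optimal average constant of
`X_t = λt`, with the convention `B_1 = -1/2`. -/
noncomputable def bernoulliConstant (lam : A) (l : ℕ) : A :=
  (((bernoulli l : ℚ) : ℝ) / (l ! : ℝ)) • lam ^ l

theorem forwardSawtooth_congr (lam : A) {b c : ℕ → A} {l : ℕ} (h : ∀ j < l, b j = c j) :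
    forwardSawtooth lam b l = forwardSawtooth lam c l := by
  funext t
  unfold forwardSawtooth
  congr 1
  exact Finset.sum_congr rfl fun j hj ↦ by rw [h j (Finset.mem_range.1 hj)]

theorem sum_range_smul_mul_bernoulliConstant (lam : A) (l : ℕ) (t : ℝ) :
    ∑ j ∈ Finset.range l, (t ^ (l - j) / ((l - j)! : ℝ)) • lam ^ (l - j) * bernoulliConstant lam j =
      ((bernoulliFun l t - ((bernoulli l : ℚ) : ℝ)) / (l ! : ℝ)) • lam ^ l := by
  rw [sub_div, bernoulliFun_div_factorial, Finset.sum_range_succ, Nat.sub_self, pow_zero,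
    Nat.factorial_zero, Nat.cast_one, div_one, one_mul, add_sub_cancel_right, Finset.sum_smul]
  refine Finset.sum_congr rfl fun j hj ↦ ?_
  rw [bernoulliConstant, smul_mul_smul_comm, pow_sub_mul_pow lam (Finset.mem_range.1 hj).le]

theorem forwardSawtooth_bernoulliConstant (lam : A) {l : ℕ} (hl : l ≠ 0) {t : ℝ} (ht : 0 ≤ t) :
    forwardSawtooth lam (bernoulliConstant lam) l t =
      ((bernoulliFun l (Int.fract t) - ((bernoulli l : ℚ) : ℝ)) / (l ! : ℝ)) • lam ^ l := by
  obtain ⟨m, rfl⟩ := Nat.exists_eq_succ_of_ne_zero hl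
  have hfract : t - (⌊t⌋₊ : ℝ) = Int.fract t := by
    rw [natCast_floor_eq_intCast_floor ht, Int.self_sub_floor]
  rw [forwardSawtooth, sum_range_smul_mul_bernoulliConstant, Nat.succ_sub_one,
    sum_range_sub_sub_one_pow_div_factorial, hfract, ← sub_smul, ← sub_div, sub_sub_sub_cancel_left]

end Algebra

section BanachAlgebra

variable {A : Type*} [NormedRing A] [NormedAlgebra ℝ A] [CompleteSpace A]

theorem integral_forwardSawtooth_bernoulliConstant (lam : A) {l : ℕ} (hl : l ≠ 0) (N : ℕ) :
    ∫ t in (0 : ℝ)..N, forwardSawtooth lam (bernoulliConstant lam) l t =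
      -((N : ℝ) • bernoulliConstant lam l) := by
  let g (t : ℝ) : ℝ := (bernoulliFun l t - ((bernoulli l : ℚ) : ℝ)) / (l ! : ℝ)
  have hg : IntervalIntegrable g volume 0 1 :=
    ((intervalIntegrable_bernoulliFun l 0 1).sub intervalIntegrable_const).div_const _
  calc ∫ t in (0 : ℝ)..N, forwardSawtooth lam (bernoulliConstant lam) l t
      = ∫ t in (0 : ℝ)..N, g (Int.fract t) • lam ^ l := by
        refine intervalIntegral.integral_congr fun t ht ↦ ?_
        rw [Set.uIcc_of_le N.cast_nonneg] at ht
        exact forwardSawtooth_bernoulliConstant lam hl ht.1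
    _ = ((N : ℝ) * ∫ t in (0 : ℝ)..1, g t) • lam ^ l := by
        rw [intervalIntegral.integral_smul_const]
        congr 1
        simpa using intervalIntegral_comp_fract hg N
    _ = -((N : ℝ) • bernoulliConstant lam l) := by
        rw [integral_bernoulliFun_sub_bernoulli_div_factorial hl, bernoulliConstant, mul_neg,
          neg_smul, mul_smul]

theorem forward_optimal_constants_eq_bernoulli_general (lam : A) {N : ℕ} (hN : N ≠ 0)
    (b : ℕ → A) (hb0 : b 0 = 1)
    (hrec : ∀ l, 1 ≤ l →
      b l = -(1 / (N : ℝ)) • ∫ t in (0 : ℝ)..N, forwardSawtooth lam b l t) (l : ℕ) :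
    b l = bernoulliConstant lam l := by
  induction l using Nat.strong_induction_on with
  | _ l ih =>
    rcases Nat.eq_zero_or_pos l with rfl | hl
    · simp [hb0, bernoulliConstant]
    · rw [hrec l hl, forwardSawtooth_congr lam ih,
        integral_forwardSawtooth_bernoulliConstant lam hl.ne', smul_neg, neg_smul, neg_neg,
        smul_smul, one_div_mul_cancel (Nat.cast_ne_zero.2 hN), one_smul]

end BanachAlgebra

/-- The forward optimal average constants of the path `X_t = λt` recover the Bernoulli
numbers with `B_1 = -1/2`. -/
theorem forward_optimal_constants_eq_bernoulli (lam : ℝ) (hlam : 0 < lam)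
    (N : ℕ) (hN : 1 ≤ N) (b : ℕ → ℝ) (hb0 : b 0 = 1)
    (hrec : ∀ l, 1 ≤ l → b l =
      -(1 / (N : ℝ)) * ∫ t in (0:ℝ)..(N:ℝ),
        ((∑ j ∈ Finset.range l, lam ^ (l - j) * (t ^ (l - j) / ((l - j)! : ℝ)) * b j)
          - lam ^ l * ∑ k ∈ Finset.range ⌊t⌋.toNat,
              (t - (k : ℝ) - 1) ^ (l - 1) / ((l - 1)! : ℝ))) :
    ∀ l, 1 ≤ l → b l = lam ^ l * ((bernoulli l : ℚ) : ℝ) / (l ! : ℝ) := fun l _ ↦ by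
  simpa [bernoulliConstant, mul_comm, mul_div_assoc] using
    forward_optimal_constants_eq_bernoulli_general lam (Nat.one_le_iff_ne_zero.1 hN) b hb0
      (by simpa [forwardSawtooth, Int.floor_toNat, mul_comm] using hrec) l
end

section
/- Let λ > 0 be real and N ≥ 1 an integer. Define real numbers b_l recursively by b_0 = 1 and, for l ≥ 1, b_l := −(1/N)·∫_0^N ( Σ_{j=0}^{l−1} λ^{l−j}·(t^{l−j}/(l−j)!)·b_j − λ^l·Σ_{k=0}^{⌊t⌋} (t−k)^{l−1}/(l−1)! ) dt. Then for every l ≥ 1, b_l = λ^l·(bernoulli' l)/l!. (These are the backward optimal average constants for the path X_t = λt produced by the paper's variance-minimization, and they recover the Bernoulli numbers with B_1 = +1/2.) -/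
open scoped Nat
open MeasureTheory

/-!
Write `P_l` for the Bernoulli polynomials. If `b j = λ ^ j * bernoulli' j / j!` for all `j < l`,
then, since `P_l (1 + t) = ∑ j ≤ l, binom(l, j) * bernoulli' j * t ^ (l - j)`, the first sum of the
integrand is `λ ^ l / l! * (P_l (1 + t) - bernoulli' l)`. By the difference equation
`P_l (1 + x) - P_l x = l * x ^ (l - 1)`, the jump terms are exactly what is lost when the argument
is moved from `1 + t` down to `fract t`. So the integrand is
`λ ^ l / l! * (P_l (fract t) - bernoulli' l)`, which is periodic; as `P_l` has mean zero over
`[0, 1]`, its average is `-λ ^ l * bernoulli' l / l!`.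
-/

section BernoulliFun

theorem bernoulli'_eq_bernoulli_add_ite (n : ℕ) :
    bernoulli' n = bernoulli n + if n = 1 then 1 else 0 := by
  rcases eq_or_ne n 1 with rfl | hn
  · norm_num
  · simp [bernoulli_eq_bernoulli'_of_ne_one hn, hn]

theorem bernoulliFun_eq_sum (l : ℕ) (t : ℝ) :
    bernoulliFun l t =
      ∑ j ∈ Finset.range (l + 1), (l.choose j : ℝ) * (bernoulli j : ℝ) * t ^ (l - j) := by
  simp [bernoulliFun, Polynomial.bernoulli, Polynomial.map_sum, Polynomial.eval_finsetSum,
    mul_comm (bernoulli _ : ℝ)]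

theorem bernoulliFun_one_add (l : ℕ) (t : ℝ) :
    bernoulliFun l (1 + t) = bernoulliFun l t + l * t ^ (l - 1) := by
  simpa [bernoulliFun, Polynomial.map_comp] using
    congrArg (fun p ↦ (p.map (algebraMap ℚ ℝ)).eval t) (Polynomial.bernoulli_comp_one_add_X l)

theorem bernoulliFun_one_add_eq_sum (l : ℕ) (t : ℝ) :
    bernoulliFun l (1 + t) =
      ∑ j ∈ Finset.range (l + 1), (l.choose j : ℝ) * (bernoulli' j : ℝ) * t ^ (l - j) := by
  rw [bernoulliFun_one_add, bernoulliFun_eq_sum]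
  cases l <;>
    simp [bernoulli'_eq_bernoulli_add_ite, mul_add, add_mul, Finset.sum_add_distrib,
      apply_ite (Rat.cast : ℚ → ℝ)]

theorem bernoulliFun_one_add_eq_sub_natCast_add_sum (l n : ℕ) (t : ℝ) :
    bernoulliFun l (1 + t) =
      bernoulliFun l (t - n) + l * ∑ k ∈ Finset.range (n + 1), (t - k) ^ (l - 1) := by
  induction n with
  | zero => simp [bernoulliFun_one_add]
  | succ n ih =>
    have shift : bernoulliFun l (t - n) =
        bernoulliFun l (t - (n + 1 : ℕ)) + l * (t - (n + 1 : ℕ)) ^ (l - 1) := by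
      rw [← bernoulliFun_one_add]
      congr 1
      push_cast
      ring
    rw [Finset.sum_range_succ, ih, shift]
    ring

theorem bernoulliFun_fract (l : ℕ) {t : ℝ} (ht : 0 ≤ t) :
    bernoulliFun l (Int.fract t) =
      ∑ j ∈ Finset.range (l + 1), (l.choose j : ℝ) * (bernoulli' j : ℝ) * t ^ (l - j) -
        l * ∑ k ∈ Finset.range (⌊t⌋₊ + 1), (t - k) ^ (l - 1) := by
  rw [← bernoulliFun_one_add_eq_sum, bernoulliFun_one_add_eq_sub_natCast_add_sum l ⌊t⌋₊,
    natCast_floor_eq_intCast_floor ht, Int.self_sub_floor, add_sub_cancel_right]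

end BernoulliFun

theorem integral_comp_fract {E : Type*} [NormedAddCommGroup E] [NormedSpace ℝ E] {f : ℝ → E}
    (hf : IntervalIntegrable f volume 0 1) (n : ℤ) (a : ℝ) :
    ∫ t in a..a + n, f (Int.fract t) = n • ∫ t in (0 : ℝ)..1, f t := by
  have periodic : Function.Periodic (fun t : ℝ ↦ f (Int.fract t)) 1 :=
    (Int.fract_periodic ℝ).comp f
  have eqOn : Set.EqOn f (fun t ↦ f (Int.fract t)) (Set.uIoo 0 1) := fun t ht ↦ by
    rw [Set.uIoo_of_le zero_le_one] at ht
    simp only [Int.fract_eq_self.2 ⟨ht.1.le, ht.2⟩]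
  have integral_period := periodic.intervalIntegral_add_zsmul_eq n a
    (periodic.intervalIntegrable₀ one_ne_zero (hf.congr_uIoo eqOn))
  rw [periodic.intervalIntegral_add_eq a 0, zero_add,
    ← intervalIntegral.integral_congr_uIoo eqOn] at integral_period
  simpa using integral_period

/-- The `l`-th component (`1 ≤ l`), at time `0 ≤ t`, of the backward sawtooth signature of the path
`X_t = t • v` with initial datum `(1, b 1, …, b (l - 1), 0, …)`: the contribution of the datum,
transported along the path, minus that of the jumps at the integers `0, …, ⌊t⌋`. The vector `v`
lives in an algebra, so that its tensor powers are the powers `v ^ l`, and the datum is all of `b`,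
of which the `l`-th component only sees the entries below `l`. -/
noncomputable def backwardSawtooth {A : Type*} [Ring A] [Algebra ℝ A] (v : A) (b : ℕ → A) (l : ℕ)
    (t : ℝ) : A :=
  ∑ j ∈ Finset.range l, (t ^ (l - j) / (l - j)! : ℝ) • (v ^ (l - j) * b j) -
    (∑ k ∈ Finset.range (⌊t⌋₊ + 1), (t - k) ^ (l - 1) / (l - 1)! : ℝ) • v ^ l

theorem backwardSawtooth_eq_bernoulliFun_fract {A : Type*} [Ring A] [Algebra ℝ A] {v : A}
    {b : ℕ → A} {l : ℕ} (hl : l ≠ 0) (hb : ∀ j < l, b j = (bernoulli' j / j ! : ℝ) • v ^ j)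
    {t : ℝ} (ht : 0 ≤ t) :
    backwardSawtooth v b l t =
      ((bernoulliFun l (Int.fract t) - bernoulli' l) / l ! : ℝ) • v ^ l := by
  have summand_eq : ∀ j ∈ Finset.range l,
      (t ^ (l - j) / (l - j)! : ℝ) • (v ^ (l - j) * b j) =
        ((l.choose j : ℝ) * (bernoulli' j : ℝ) * t ^ (l - j) / l ! : ℝ) • v ^ l := fun j hj ↦ by
    have hjl : j < l := Finset.mem_range.1 hj
    rw [hb j hjl, mul_smul_comm, smul_smul, pow_sub_mul_pow v hjl.le, Nat.cast_choose ℝ hjl.le]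
    congr 1
    field_simp
  have factorial_eq : (l ! : ℝ) = l * (l - 1)! := mod_cast (Nat.mul_factorial_pred hl).symm
  have hl₀ : (l : ℝ) ≠ 0 := mod_cast hl
  rw [backwardSawtooth, Finset.sum_congr rfl summand_eq, ← Finset.sum_smul, ← sub_smul,
    ← Finset.sum_div, ← Finset.sum_div, bernoulliFun_fract l ht, Finset.sum_range_succ _ l]
  simp only [Nat.choose_self, Nat.cast_one, one_mul, Nat.sub_self, pow_zero, mul_one, factorial_eq]
  congr 1
  field_simp
  ring

section BanachAlgebra

variable {A : Type*} [NormedRing A] [NormedAlgebra ℝ A] [CompleteSpace A]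

theorem integral_backwardSawtooth {v : A} {b : ℕ → A} {l : ℕ} (hl : l ≠ 0)
    (hb : ∀ j < l, b j = (bernoulli' j / j ! : ℝ) • v ^ j) (N : ℕ) :
    ∫ t in (0 : ℝ)..N, backwardSawtooth v b l t =
      -((N : ℝ) • (bernoulli' l / l ! : ℝ) • v ^ l) := by
  let f : ℝ → ℝ := fun x ↦ (bernoulliFun l x - bernoulli' l) / (l ! : ℝ)
  have integrable_f : IntervalIntegrable f volume 0 1 :=
    ((intervalIntegrable_bernoulliFun l 0 1).sub intervalIntegrable_const).div_const _
  have integral_f : ∫ x in (0 : ℝ)..1, f x = -(bernoulli' l / l !) := by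
    simp [f, intervalIntegral.integral_sub (intervalIntegrable_bernoulliFun l 0 1)
      intervalIntegrable_const, integral_bernoulliFun_eq_zero hl, neg_div]
  calc ∫ t in (0 : ℝ)..N, backwardSawtooth v b l t
      = ∫ t in (0 : ℝ)..N, f (Int.fract t) • v ^ l :=
        intervalIntegral.integral_congr fun t ht ↦
          backwardSawtooth_eq_bernoulliFun_fract hl hb
            (by rw [Set.uIcc_of_le N.cast_nonneg] at ht; exact ht.1)
    _ = ((N : ℝ) * ∫ x in (0 : ℝ)..1, f x) • v ^ l := by
        rw [intervalIntegral.integral_smul_const]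
        simpa using congrArg (· • v ^ l) (integral_comp_fract integrable_f N 0)
    _ = -((N : ℝ) • (bernoulli' l / l ! : ℝ) • v ^ l) := by
        rw [integral_f, mul_neg, neg_smul, mul_smul]

theorem backward_optimal_constants_eq_bernoulli'_general (v : A) {N : ℕ} (hN : N ≠ 0) {b : ℕ → A}
    (hb₀ : b 0 = 1)
    (hrec : ∀ l, 1 ≤ l → b l = -(1 / N : ℝ) • ∫ t in (0 : ℝ)..N, backwardSawtooth v b l t)
    (l : ℕ) : b l = (bernoulli' l / l ! : ℝ) • v ^ l := by
  induction l using Nat.strong_induction_on with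
  | _ l ih =>
    rcases Nat.eq_zero_or_pos l with rfl | hl
    · simp [hb₀]
    · rw [hrec l hl, integral_backwardSawtooth hl.ne' ih, neg_smul_neg, smul_smul,
        one_div_mul_cancel (Nat.cast_ne_zero.2 hN), one_smul]

end BanachAlgebra

/-- The backward optimal average constants of the path `X_t = λt` recover the Bernoulli
numbers with `B_1 = +1/2`. -/
theorem backward_optimal_constants_eq_bernoulli' (lam : ℝ) (hlam : 0 < lam)
    (N : ℕ) (hN : 1 ≤ N) (b : ℕ → ℝ) (hb0 : b 0 = 1)
    (hrec : ∀ l, 1 ≤ l → b l =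
      -(1 / (N : ℝ)) * ∫ t in (0:ℝ)..(N:ℝ),
        ((∑ j ∈ Finset.range l, lam ^ (l - j) * (t ^ (l - j) / ((l - j)! : ℝ)) * b j)
          - lam ^ l * ∑ k ∈ Finset.range (⌊t⌋.toNat + 1),
              (t - (k : ℝ)) ^ (l - 1) / ((l - 1)! : ℝ))) :
    ∀ l, 1 ≤ l → b l = lam ^ l * ((bernoulli' l : ℚ) : ℝ) / (l ! : ℝ) := by
  have hrec' : ∀ l, 1 ≤ l →
      b l = -(1 / N : ℝ) • ∫ t in (0 : ℝ)..N, backwardSawtooth lam b l t := by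
    simpa only [backwardSawtooth, smul_eq_mul, Int.floor_toNat, mul_left_comm, mul_comm, mul_assoc]
      using hrec
  intro l _
  rw [backward_optimal_constants_eq_bernoulli'_general lam (by lia) hb0 hrec' l, smul_eq_mul]
  ring
end

section
/- For every integer l ≥ 1 and every real t ≥ 0: Σ_{j=0}^{l} (t^{l−j}/(l−j)!)·(bernoulli' j)/j! − Σ_{k=0}^{⌊t⌋} (t−k)^{l−1}/(l−1)! = P_l(t − ⌊t⌋)/l!. (This says the backward optimal sawtooth signature of the path X_t = t, with initial constants b_j = (bernoulli' j)/j!, equals the periodized Bernoulli polynomial divided by l!.) -/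
open scoped Nat

/-- The `l`-th Bernoulli polynomial `P_l(x) = ∑_{j=0}^l C(l,j) · B_j · x^{l-j}`,
with `bernoulli 1 = -1/2`. -/
noncomputable def bernoulliPoly (l : ℕ) (x : ℝ) : ℝ :=
  ∑ j ∈ Finset.range (l + 1), (l.choose j : ℝ) * ((bernoulli j : ℚ) : ℝ) * x ^ (l - j)

/-!
The Bernoulli polynomial satisfies `P_l(1 + x) = P_l(x) + l x^(l-1)`. On the one hand, since
`bernoulli'` and `bernoulli` differ only at the index `1`, and there by `1`, the increment
`l x^(l-1)` is exactly what turns the `bernoulli` coefficients of `P_l(x)` into `bernoulli'`; hence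
the first sum of the signature is `P_l(1 + t) / l!`. On the other hand, the increments at
`t, t - 1, …, t - n` telescope, so the second sum is `(P_l(1 + t) - P_l(t - n)) / l!`.
-/

open Polynomial (aeval)

section RatAlgebra

variable {A : Type*} [CommRing A] [Algebra ℚ A]

theorem aeval_bernoulli_eq_sum (l : ℕ) (x : A) :
    aeval x (Polynomial.bernoulli l) =
      ∑ j ∈ Finset.range (l + 1),
        (l.choose j : A) * algebraMap ℚ A (bernoulli j) * x ^ (l - j) := by
  simp only [Polynomial.bernoulli, map_sum, Polynomial.aeval_monomial, map_mul, map_natCast,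
    mul_comm]

theorem aeval_one_add_bernoulli (l : ℕ) (x : A) :
    aeval (1 + x) (Polynomial.bernoulli l) =
      aeval x (Polynomial.bernoulli l) + l * x ^ (l - 1) := by
  simpa [Polynomial.aeval_comp] using
    congrArg (aeval x) (Polynomial.bernoulli_comp_one_add_X l)

theorem aeval_one_add_bernoulli_eq_sum_bernoulli' (l : ℕ) (x : A) :
    aeval (1 + x) (Polynomial.bernoulli l) =
      ∑ j ∈ Finset.range (l + 1),
        (l.choose j : A) * algebraMap ℚ A (bernoulli' j) * x ^ (l - j) := by
  rw [aeval_one_add_bernoulli, aeval_bernoulli_eq_sum, ← eq_sub_iff_add_eq',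
    ← Finset.sum_sub_distrib, Finset.sum_eq_single 1]
  · have bernoulli'_one_sub_bernoulli_one : bernoulli' 1 - bernoulli 1 = 1 := by
      norm_num
    rw [← sub_mul, ← mul_sub, ← map_sub, bernoulli'_one_sub_bernoulli_one, map_one, mul_one,
      Nat.choose_one_right]
  · intro j _ hj
    rw [bernoulli_eq_bernoulli'_of_ne_one hj, sub_self]
  · intro h
    have hl : l = 0 := by simpa using h
    simp [hl]

theorem mul_sum_range_sub_natCast_pow (l n : ℕ) (x : A) :
    l * ∑ k ∈ Finset.range n, (x - k) ^ (l - 1) =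
      aeval (1 + x) (Polynomial.bernoulli l) - aeval (1 + x - n) (Polynomial.bernoulli l) := by
  have increment (k : ℕ) : l * (x - k) ^ (l - 1) =
      aeval (1 + x - k) (Polynomial.bernoulli l) -
        aeval (1 + x - (k + 1 : ℕ)) (Polynomial.bernoulli l) := by
    rw [add_sub_assoc, aeval_one_add_bernoulli, Nat.cast_add_one, add_comm (k : A),
      add_sub_add_left_eq_sub, add_sub_cancel_left]
  simp only [Finset.mul_sum, increment, Finset.sum_range_sub', Nat.cast_zero, sub_zero]

end RatAlgebra

section Field

variable {K : Type*} [Field K] [CharZero K]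

theorem sum_pow_div_factorial_mul_bernoulli'_div_factorial (l : ℕ) (x : K) :
    ∑ j ∈ Finset.range (l + 1), x ^ (l - j) / ((l - j)! : K) * ((bernoulli' j : K) / (j ! : K)) =
      aeval (1 + x) (Polynomial.bernoulli l) / (l ! : K) := by
  rw [aeval_one_add_bernoulli_eq_sum_bernoulli', Finset.sum_div]
  refine Finset.sum_congr rfl fun j hj => ?_
  rw [Nat.cast_choose K (Finset.mem_range_succ_iff.mp hj), eq_ratCast]
  have factorial_ne_zero : (l ! : K) ≠ 0 := Nat.cast_ne_zero.mpr l.factorial_ne_zero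
  field_simp

theorem sum_range_sub_natCast_pow_div_factorial {l : ℕ} (hl : 1 ≤ l) (n : ℕ) (x : K) :
    ∑ k ∈ Finset.range n, (x - k) ^ (l - 1) / ((l - 1)! : K) =
      (aeval (1 + x) (Polynomial.bernoulli l) - aeval (1 + x - n) (Polynomial.bernoulli l)) /
        (l ! : K) := by
  have hl' : l ≠ 0 := Nat.one_le_iff_ne_zero.mp hl
  rw [← mul_sum_range_sub_natCast_pow, ← Nat.mul_factorial_pred hl', Nat.cast_mul,
    mul_div_mul_left _ _ (Nat.cast_ne_zero.mpr hl'), Finset.sum_div]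

theorem backward_optimal_sawtooth_eq_bernoulliPoly_general {l : ℕ} (hl : 1 ≤ l) (n : ℕ) (x : K) :
    (∑ j ∈ Finset.range (l + 1), x ^ (l - j) / ((l - j)! : K) * ((bernoulli' j : K) / (j ! : K)))
      - (∑ k ∈ Finset.range (n + 1), (x - k) ^ (l - 1) / ((l - 1)! : K))
      = aeval (x - n) (Polynomial.bernoulli l) / (l ! : K) := by
  rw [sum_pow_div_factorial_mul_bernoulli'_div_factorial,
    sum_range_sub_natCast_pow_div_factorial hl, ← sub_div, sub_sub_cancel, Nat.cast_add_one,
    add_comm (n : K), add_sub_add_left_eq_sub]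

end Field

theorem bernoulliPoly_eq_aeval (l : ℕ) (x : ℝ) :
    bernoulliPoly l x = aeval x (Polynomial.bernoulli l) :=
  (aeval_bernoulli_eq_sum l x).symm

/-- The backward optimal sawtooth signature of `X_t = t`, with constants
`b_j = bernoulli' j / j!`, equals the periodized Bernoulli polynomial over `l!`. -/
theorem backward_optimal_sawtooth_eq_bernoulliPoly (l : ℕ) (hl : 1 ≤ l)
    (t : ℝ) (ht : 0 ≤ t) :
    (∑ j ∈ Finset.range (l + 1),
        (t ^ (l - j) / ((l - j)! : ℝ)) * (((bernoulli' j : ℚ) : ℝ) / (j ! : ℝ)))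
      - (∑ k ∈ Finset.range (⌊t⌋.toNat + 1), (t - (k : ℝ)) ^ (l - 1) / ((l - 1)! : ℝ))
      = bernoulliPoly l (t - ⌊t⌋) / (l ! : ℝ) := by
  rw [backward_optimal_sawtooth_eq_bernoulliPoly_general hl, bernoulliPoly_eq_aeval,
    Int.floor_toNat, natCast_floor_eq_intCast_floor ht]
end

section
/- Let (Ω, P) be a probability space, N ≥ 1 an integer, and α : Ω → ℝ a random variable with α > 0 almost surely and α^k integrable for every k ≥ 1. Define real numbers b_l recursively by b_0 = 1 and, for l ≥ 1, b_l := −(1/(N·E[α]))·E[ α·∫_0^N ( Σ_{j=0}^{l−1} α^{l−j}·(t^{l−j}/(l−j)!)·b_j − α^l·Σ_{k=0}^{⌊t⌋−1} (t−k−1)^{l−1}/(l−1)! ) dt ]. Then for every l ≥ 1 the recursion b_l = (1/E[α])·( E[α^{l+1}]·Σ_{j=0}^{l} (N^{l−j}/(l+1−j)!)·(bernoulli j)/j! − Σ_{j=0}^{l−1} E[α^{l+1−j}]·(N^{l−j}/(l+1−j)!)·b_j ) holds. (These are the forward optimal average constants associated with the random path X_t = αt.) -/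
open scoped Nat
open MeasureTheory

/-!
The time integrand is a polynomial in `t` minus a multiple of the sum of the delayed powers
`(t - k) ^ (l - 1) / (l - 1)!` over `1 ≤ k ≤ t`. Integration passes through the delays, so this sum
integrates over `[0, N]` to `∑_{n < N} n ^ l / l!`, which Faulhaber's formula expresses through the
Bernoulli numbers. For each sample the time integral multiplied by `α` is therefore `N` times a
polynomial in `α`, and taking expectations monomial by monomial gives the recursion.
-/

/-- The sum `∑_{1 ≤ k ≤ t} f (t - k)` of the unit delays of a signal `f` that have started by time
`t`; the index `k` is shifted by one. It carries the effect of the unit jumps of a sawtooth path. -/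
noncomputable def delaySum {E : Type*} [AddCommMonoid E] (f : ℝ → E) (t : ℝ) : E :=
  ∑ k ∈ Finset.range ⌊t⌋₊, f (t - k - 1)

/-- The `l`-th component (`1 ≤ l`) at time `t` of the forward sawtooth signature of the path
`X_t = a t` with initial datum `(b 0, …, b (l - 1), 0, …)`. -/
noncomputable def sawtoothSignature (b : ℕ → ℝ) (a : ℝ) (l : ℕ) (t : ℝ) : ℝ :=
  (∑ j ∈ Finset.range l, a ^ (l - j) * (t ^ (l - j) / ((l - j)! : ℝ)) * b j)
    - a ^ l * delaySum (fun u => u ^ (l - 1) / ((l - 1)! : ℝ)) t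

section Indicator

variable {E : Type*} [NormedAddCommGroup E] {g : ℝ → E} {a b c : ℝ}

theorem intervalIntegrable_indicator_Ici (hg : IntervalIntegrable g volume c b) (hac : a ≤ c)
    (hcb : c ≤ b) : IntervalIntegrable ((Set.Ici c).indicator g) volume a b := by
  rw [intervalIntegrable_iff_integrableOn_Ioc_of_le (hac.trans hcb),
    integrableOn_indicator_iff measurableSet_Ici]
  exact ((intervalIntegrable_iff_integrableOn_Icc_of_le hcb).mp hg).mono_set
    fun _ ht => ⟨ht.1, ht.2.2⟩

theorem intervalIntegral_indicator_Ici [NormedSpace ℝ E] (g : ℝ → E) (hac : a ≤ c) (hcb : c ≤ b) :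
    ∫ t in a..b, (Set.Ici c).indicator g t = ∫ t in c..b, g t := by
  have hinter : (Set.Ioc a b ∩ Set.Ici c : Set ℝ) =ᵐ[volume] (Set.Ioc c b : Set ℝ) := by
    simpa only [Set.Ioc_inter_Ioi, sup_eq_right.mpr hac] using
      ae_eq_set_inter (ae_eq_refl (Set.Ioc a b)) (Ioi_ae_eq_Ici (μ := volume) (a := c)).symm
  rw [intervalIntegral.integral_of_le (hac.trans hcb), setIntegral_indicator measurableSet_Ici,
    setIntegral_congr_set hinter, intervalIntegral.integral_of_le hcb]

end Indicator

theorem lt_natFloor_iff_add_one_le {R : Type*} [Semiring R] [LinearOrder R] [IsStrictOrderedRing R]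
    [FloorSemiring R] {x : R} {k : ℕ} : k < ⌊x⌋₊ ↔ (k : R) + 1 ≤ x := by
  rw [Nat.lt_iff_add_one_le, Nat.le_floor_iff' k.succ_ne_zero, Nat.cast_add_one]

section DelaySum

variable {E : Type*} {f : ℝ → E} {x : ℝ}

theorem delaySum_eq_sum_indicator [AddCommMonoid E] (f : ℝ → E) {t : ℝ} (htx : t ≤ x) :
    delaySum f t =
      ∑ k ∈ Finset.range ⌊x⌋₊, (Set.Ici ((k : ℝ) + 1)).indicator (fun s => f (s - k - 1)) t := by
  have hrange : Finset.range ⌊t⌋₊ = (Finset.range ⌊x⌋₊).filter fun k : ℕ => (k : ℝ) + 1 ≤ t := by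
    ext k
    simp only [Finset.mem_range, Finset.mem_filter, lt_natFloor_iff_add_one_le]
    exact ⟨fun h => ⟨h.trans htx, h⟩, And.right⟩
  simp only [delaySum, hrange, Finset.sum_filter, Set.indicator_apply, Set.mem_Ici]

theorem delaySum_natCast [AddCommMonoid E] (f : ℝ → E) (n : ℕ) :
    delaySum f n = ∑ k ∈ Finset.range n, f k := by
  rw [delaySum, Nat.floor_natCast, ← Finset.sum_range_reflect]
  refine Finset.sum_congr rfl fun k hk => congrArg f ?_
  rw [Nat.sub_sub, Nat.cast_sub (by grind)]
  push_cast
  ring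

variable [NormedAddCommGroup E]

theorem intervalIntegrable_indicator_delay (hf : IntervalIntegrable f volume 0 x) {k : ℕ}
    (hk : (k : ℝ) + 1 ≤ x) :
    IntervalIntegrable ((Set.Ici ((k : ℝ) + 1)).indicator fun t => f (t - k - 1)) volume 0 x := by
  refine intervalIntegrable_indicator_Ici ?_ k.cast_add_one_pos.le hk
  have hsub : Set.uIcc 0 (x - (k + 1)) ⊆ Set.uIcc 0 x :=
    Set.uIcc_subset_uIcc_left <|
      Set.mem_uIcc_of_le (sub_nonneg.mpr hk) (sub_le_self x k.cast_add_one_pos.le)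
  simpa only [zero_add, sub_add_cancel, sub_sub] using (hf.mono_set hsub).comp_sub_right (k + 1)

theorem intervalIntegral_indicator_delay [NormedSpace ℝ E] (f : ℝ → E) {k : ℕ}
    (hk : (k : ℝ) + 1 ≤ x) :
    ∫ t in 0..x, (Set.Ici ((k : ℝ) + 1)).indicator (fun s => f (s - k - 1)) t =
      ∫ u in 0..x - k - 1, f u := by
  rw [intervalIntegral_indicator_Ici _ k.cast_add_one_pos.le hk]
  simp only [sub_sub, intervalIntegral.integral_comp_sub_right, sub_self]

theorem intervalIntegrable_delaySum (hf : IntervalIntegrable f volume 0 x) (hx : 0 ≤ x) :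
    IntervalIntegrable (delaySum f) volume 0 x := by
  refine (IntervalIntegrable.sum (Finset.range ⌊x⌋₊) fun k hk =>
    intervalIntegrable_indicator_delay hf
      (lt_natFloor_iff_add_one_le.mp (Finset.mem_range.mp hk))).congr_uIoo fun t ht => ?_
  rw [Set.uIoo_of_le hx] at ht
  rw [delaySum_eq_sum_indicator f ht.2.le, Finset.sum_apply]

theorem integral_delaySum [NormedSpace ℝ E] (hf : IntervalIntegrable f volume 0 x) (hx : 0 ≤ x) :
    ∫ t in 0..x, delaySum f t = delaySum (fun y => ∫ u in 0..y, f u) x := by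
  have hdelay (k : ℕ) (hk : k ∈ Finset.range ⌊x⌋₊) : (k : ℝ) + 1 ≤ x :=
    lt_natFloor_iff_add_one_le.mp (Finset.mem_range.mp hk)
  calc ∫ t in 0..x, delaySum f t
      = ∫ t in 0..x, ∑ k ∈ Finset.range ⌊x⌋₊,
          (Set.Ici ((k : ℝ) + 1)).indicator (fun s => f (s - k - 1)) t :=
        intervalIntegral.integral_congr_Ioo_of_le hx fun t ht =>
          delaySum_eq_sum_indicator f ht.2.le
    _ = ∑ k ∈ Finset.range ⌊x⌋₊, ∫ t in 0..x,
          (Set.Ici ((k : ℝ) + 1)).indicator (fun s => f (s - k - 1)) t :=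
        intervalIntegral.integral_finsetSum fun k hk =>
          intervalIntegrable_indicator_delay hf (hdelay k hk)
    _ = delaySum (fun y => ∫ u in 0..y, f u) x :=
        Finset.sum_congr rfl fun k hk => intervalIntegral_indicator_delay f (hdelay k hk)

end DelaySum

theorem integral_pow_div_factorial (p : ℕ) (x : ℝ) :
    ∫ t in 0..x, t ^ p / (p ! : ℝ) = x ^ (p + 1) / ((p + 1)! : ℝ) := by
  rw [intervalIntegral.integral_div, integral_pow, zero_pow p.succ_ne_zero, sub_zero, div_div,
    Nat.factorial_succ, Nat.cast_mul, Nat.cast_add_one]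

theorem sum_range_pow_div_factorial {K : Type*} [Field K] [CharZero K] (N l : ℕ) :
    ∑ n ∈ Finset.range N, (n : K) ^ l / (l ! : K) =
      N * ∑ j ∈ Finset.range (l + 1),
        ((N : K) ^ (l - j) / ((l + 1 - j)! : K)) * (((bernoulli j : ℚ) : K) / (j ! : K)) := by
  have hfaulhaber := congrArg (Rat.cast : ℚ → K) (sum_range_pow N l)
  push_cast at hfaulhaber
  rw [← Finset.sum_div, hfaulhaber, Finset.sum_div, Finset.mul_sum]
  refine Finset.sum_congr rfl fun j hj => ?_
  have hjl : j ≤ l := Finset.mem_range_succ_iff.mp hj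
  have hl : (l ! : K) ≠ 0 := mod_cast l.factorial_ne_zero
  have hl1 : (l + 1 : K) ≠ 0 := mod_cast l.succ_ne_zero
  rw [Nat.cast_choose K (by lia : j ≤ l + 1), Nat.factorial_succ, Nat.sub_add_comm hjl, pow_succ]
  push_cast
  field_simp

section SawtoothSignature

variable {l : ℕ}

theorem integral_sawtoothSignature (b : ℕ → ℝ) (a : ℝ) (hl : l ≠ 0) {x : ℝ} (hx : 0 ≤ x) :
    ∫ t in 0..x, sawtoothSignature b a l t =
      (∑ j ∈ Finset.range l, a ^ (l - j) * (x ^ (l - j + 1) / ((l - j + 1)! : ℝ)) * b j)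
        - a ^ l * delaySum (fun u => u ^ l / (l ! : ℝ)) x := by
  have hdelay : IntervalIntegrable (delaySum fun u => u ^ (l - 1) / ((l - 1)! : ℝ)) volume 0 x :=
    intervalIntegrable_delaySum (Continuous.intervalIntegrable (by fun_prop) _ _) hx
  simp only [sawtoothSignature]
  rw [intervalIntegral.integral_sub (Continuous.intervalIntegrable (by fun_prop) _ _)
      (hdelay.const_mul _),
    intervalIntegral.integral_finsetSum fun j _ => Continuous.intervalIntegrable (by fun_prop) _ _,
    intervalIntegral.integral_const_mul,
    integral_delaySum (Continuous.intervalIntegrable (by fun_prop) _ _) hx]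
  simp only [intervalIntegral.integral_mul_const, intervalIntegral.integral_const_mul,
    integral_pow_div_factorial, Nat.sub_add_cancel (Nat.one_le_iff_ne_zero.mpr hl)]

theorem mul_integral_sawtoothSignature (b : ℕ → ℝ) (a : ℝ) (hl : l ≠ 0) (N : ℕ) :
    a * ∫ t in 0..(N : ℝ), sawtoothSignature b a l t =
      N * ((∑ j ∈ Finset.range l,
          a ^ (l + 1 - j) * ((N : ℝ) ^ (l - j) / ((l + 1 - j)! : ℝ)) * b j)
        - a ^ (l + 1) * ∑ j ∈ Finset.range (l + 1),
            ((N : ℝ) ^ (l - j) / ((l + 1 - j)! : ℝ)) * (((bernoulli j : ℚ) : ℝ) / (j ! : ℝ))) := by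
  have hpoly : a * ∑ j ∈ Finset.range l,
        a ^ (l - j) * (N ^ (l - j + 1) / ((l - j + 1)! : ℝ)) * b j =
      N * ∑ j ∈ Finset.range l,
        a ^ (l + 1 - j) * ((N : ℝ) ^ (l - j) / ((l + 1 - j)! : ℝ)) * b j := by
    rw [Finset.mul_sum, Finset.mul_sum]
    refine Finset.sum_congr rfl fun j hj => ?_
    rw [Nat.sub_add_comm (Finset.mem_range.mp hj).le]
    ring
  rw [integral_sawtoothSignature b a hl N.cast_nonneg, delaySum_natCast,
    sum_range_pow_div_factorial, mul_sub, hpoly]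
  ring

variable {Ω : Type*} [MeasurableSpace Ω] {μ : Measure Ω} {α : Ω → ℝ}

theorem integral_mul_integral_sawtoothSignature (b : ℕ → ℝ) (hl : l ≠ 0) (N : ℕ)
    (hint : ∀ k, 2 ≤ k → k ≤ l + 1 → Integrable (fun ω => α ω ^ k) μ) :
    ∫ ω, (α ω * ∫ t in 0..(N : ℝ), sawtoothSignature b (α ω) l t) ∂μ =
      N * ((∑ j ∈ Finset.range l,
          (∫ ω, α ω ^ (l + 1 - j) ∂μ) * ((N : ℝ) ^ (l - j) / ((l + 1 - j)! : ℝ)) * b j)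
        - (∫ ω, α ω ^ (l + 1) ∂μ) * ∑ j ∈ Finset.range (l + 1),
            ((N : ℝ) ^ (l - j) / ((l + 1 - j)! : ℝ)) * (((bernoulli j : ℚ) : ℝ) / (j ! : ℝ))) := by
  have hterm (j : ℕ) (hj : j ∈ Finset.range l) : Integrable (fun ω =>
      α ω ^ (l + 1 - j) * ((N : ℝ) ^ (l - j) / ((l + 1 - j)! : ℝ)) * b j) μ :=
    ((hint _ (by grind) (by lia)).mul_const _).mul_const _
  simp only [mul_integral_sawtoothSignature b _ hl]
  rw [integral_const_mul, integral_sub (integrable_finsetSum _ hterm)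
    ((hint _ (by lia) le_rfl).mul_const _), integral_finsetSum _ hterm]
  simp only [integral_mul_const]

end SawtoothSignature

theorem integral_pos_of_ae_pos {Ω : Type*} [MeasurableSpace Ω] {μ : Measure Ω} [NeZero μ]
    {f : Ω → ℝ} (hf : Integrable f μ) (hpos : ∀ᵐ ω ∂μ, 0 < f ω) : 0 < ∫ ω, f ω ∂μ := by
  have hnonneg : 0 ≤ᵐ[μ] f := hpos.mono fun _ => le_of_lt
  refine (integral_nonneg_of_ae hnonneg).lt_of_ne' fun hzero => ?_
  obtain ⟨ω, hω, hω'⟩ := (hpos.and ((integral_eq_zero_iff_of_nonneg_ae hnonneg hf).mp hzero)).exists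
  exact hω.ne' hω'

theorem random_forward_optimal_constants_recursion_general {Ω : Type*} [MeasurableSpace Ω]
    {μ : Measure Ω} {N l : ℕ} (hN : N ≠ 0) (hl : l ≠ 0) {α : Ω → ℝ} (hmean : ∫ ω, α ω ∂μ ≠ 0)
    (hint : ∀ k, 2 ≤ k → k ≤ l + 1 → Integrable (fun ω => α ω ^ k) μ)
    (b : ℕ → ℝ)
    (hdef : b l = -(1 / ((N : ℝ) * ∫ ω, α ω ∂μ)) *
      ∫ ω, (α ω * ∫ t in 0..(N : ℝ), sawtoothSignature b (α ω) l t) ∂μ) :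
    b l = (1 / ∫ ω, α ω ∂μ) *
      ((∫ ω, α ω ^ (l + 1) ∂μ) *
          (∑ j ∈ Finset.range (l + 1),
            ((N : ℝ) ^ (l - j) / ((l + 1 - j)! : ℝ)) * (((bernoulli j : ℚ) : ℝ) / (j ! : ℝ)))
        - ∑ j ∈ Finset.range l,
            (∫ ω, α ω ^ (l + 1 - j) ∂μ) *
              ((N : ℝ) ^ (l - j) / ((l + 1 - j)! : ℝ)) * b j) := by
  rw [hdef, integral_mul_integral_sawtoothSignature b hl N hint]
  field_simp
  ring

/-- The forward optimal average constants associated with the random path `X_t = αt`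
satisfy the stated recursion involving the moments of `α` and the Bernoulli numbers. -/
theorem random_forward_optimal_constants_recursion {Ω : Type*} [MeasurableSpace Ω]
    (μ : Measure Ω) [IsProbabilityMeasure μ] (N : ℕ) (hN : 1 ≤ N)
    (α : Ω → ℝ) (hpos : ∀ᵐ ω ∂μ, 0 < α ω)
    (hint : ∀ k : ℕ, 1 ≤ k → Integrable (fun ω => α ω ^ k) μ)
    (b : ℕ → ℝ) (hb0 : b 0 = 1)
    (hdef : ∀ l, 1 ≤ l → b l =
      -(1 / ((N : ℝ) * ∫ ω, α ω ∂μ)) *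
        ∫ ω, (α ω * ∫ t in (0:ℝ)..(N:ℝ),
          ((∑ j ∈ Finset.range l, α ω ^ (l - j) * (t ^ (l - j) / ((l - j)! : ℝ)) * b j)
            - α ω ^ l * ∑ k ∈ Finset.range ⌊t⌋.toNat,
                (t - (k : ℝ) - 1) ^ (l - 1) / ((l - 1)! : ℝ))) ∂μ) :
    ∀ l, 1 ≤ l → b l =
      (1 / ∫ ω, α ω ∂μ) *
        ((∫ ω, α ω ^ (l + 1) ∂μ) *
            (∑ j ∈ Finset.range (l + 1),
              ((N : ℝ) ^ (l - j) / ((l + 1 - j)! : ℝ)) * (((bernoulli j : ℚ) : ℝ) / (j ! : ℝ)))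
          - ∑ j ∈ Finset.range l,
              (∫ ω, α ω ^ (l + 1 - j) ∂μ) *
                ((N : ℝ) ^ (l - j) / ((l + 1 - j)! : ℝ)) * b j) := by
  have hmean : 0 < ∫ ω, α ω ∂μ := integral_pos_of_ae_pos (by simpa using hint 1 le_rfl) hpos
  exact fun l hl => random_forward_optimal_constants_recursion_general (by lia) (by lia) hmean.ne'
    (fun k hk _ => hint k (by lia)) b (hdef l hl)
end
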